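/- For every integer n ≥ 1, quantum correlations are not n-chotomic: there exist integers m ≥ 1, r ≥ 1 and an m-chotomic quantum correlation Q ∈ 𝒫₂[m,r] such that I'(Q) < inf{ I'(P) : r' ≥ 1, P ∈ 𝒫₂[n,r'] }. In particular, Q cannot be obtained, or even approximated in the value of I', by n-chotomic quantum correlations with any number of outcomes. -/

import Mathlib

open Matrix Kronecker BigOperators
open scoped ComplexOrder

noncomputable section

/-- A bipartite correlation with two settings per party (`μ ν : Fin 2`, where index
`0` is setting 1 and index `1` is setting 2) and `r` outcomes per setting
(`k ℓ : Fin r`, where index `i` is outcome `i+1`): all probabilities are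
nonnegative and, for each pair of settings, they sum to one. -/
def IsCorrelation (r : ℕ) (P : Fin 2 → Fin 2 → Fin r → Fin r → ℝ) : Prop :=
  (∀ μ ν k ℓ, 0 ≤ P μ ν k ℓ) ∧ (∀ μ ν, ∑ k, ∑ ℓ, P μ ν k ℓ = 1)

/-- The Zohren–Gill expression
`I'(P) = P₂₂(k<ℓ) + P₁₂(k>ℓ) + P₁₁(k<ℓ) + P₂₁(k≥ℓ)`. -/
def ZG {r : ℕ} (P : Fin 2 → Fin 2 → Fin r → Fin r → ℝ) : ℝ :=
    (∑ k, ∑ ℓ, if k < ℓ then P 1 1 k ℓ else 0)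
  + (∑ k, ∑ ℓ, if ℓ < k then P 0 1 k ℓ else 0)
  + (∑ k, ∑ ℓ, if k < ℓ then P 0 0 k ℓ else 0)
  + (∑ k, ∑ ℓ, if ℓ ≤ k then P 1 0 k ℓ else 0)

/-- `P ∈ 𝒫₂[n,r]`: `P` is an `n`-chotomic quantum correlation with two settings per
party and `r` outcomes per setting.  There are a finite index set `Fin a`,
dimensions `dA, dB ≥ 1`, positive semidefinite states `η α` on the tensor product
space with total trace one, and for each setting positive semidefinite local
measurement operators summing to the identity with at most `n` nonzero members
for each `α`, reproducing `P` via the Born rule. -/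
def IsNChotomicQC (n r : ℕ) (P : Fin 2 → Fin 2 → Fin r → Fin r → ℝ) : Prop :=
  IsCorrelation r P ∧
  ∃ (a dA dB : ℕ), 1 ≤ dA ∧ 1 ≤ dB ∧
  ∃ (η : Fin a → Matrix (Fin dA × Fin dB) (Fin dA × Fin dB) ℂ)
    (DA : Fin 2 → Fin a → Fin r → Matrix (Fin dA) (Fin dA) ℂ)
    (DB : Fin 2 → Fin a → Fin r → Matrix (Fin dB) (Fin dB) ℂ),
    (∀ α, (η α).PosSemidef) ∧ (∑ α, (η α).trace) = 1 ∧
    (∀ μ α k, (DA μ α k).PosSemidef) ∧ (∀ μ α, ∑ k, DA μ α k = 1) ∧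
    (∀ μ α, {k | DA μ α k ≠ 0}.ncard ≤ n) ∧
    (∀ ν α k, (DB ν α k).PosSemidef) ∧ (∀ ν α, ∑ k, DB ν α k = 1) ∧
    (∀ ν α, {k | DB ν α k ≠ 0}.ncard ≤ n) ∧
    (∀ μ ν k ℓ, (P μ ν k ℓ : ℂ) = ∑ α, (η α * (DA μ α k ⊗ₖ DB ν α ℓ)).trace)

/-- `q_{n,r} = inf { I'(P) : P ∈ 𝒫₂[n,r] }`. -/
def qnr (n r : ℕ) : ℝ := sInf {x | ∃ P, IsNChotomicQC n r P ∧ ZG P = x}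

/-- `q_n = inf { q_{n,r} : r ≥ n }`. -/
def qn (n : ℕ) : ℝ := sInf {x | ∃ r, n ≤ r ∧ qnr n r = x}

/-- The no-signaling condition for a bipartite correlation. -/
def NoSignaling (r : ℕ) (P : Fin 2 → Fin 2 → Fin r → Fin r → ℝ) : Prop :=
  (∀ μ k, ∑ ℓ, P μ 0 k ℓ = ∑ ℓ, P μ 1 k ℓ) ∧
  (∀ ν ℓ, ∑ k, P 0 ν k ℓ = ∑ k, P 1 ν k ℓ)

/-- Merging the last outcome (outcome `r+1`, index `Fin.last r`) with the first
outcome (index `0`) on both parties, turning a correlation with `r+1` outcomes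
into one with `r` outcomes. -/
def mergeLast {r : ℕ} (P : Fin 2 → Fin 2 → Fin (r+1) → Fin (r+1) → ℝ) :
    Fin 2 → Fin 2 → Fin r → Fin r → ℝ :=
  fun μ ν k ℓ =>
    P μ ν k.castSucc ℓ.castSucc
    + (if (k : ℕ) = 0 then P μ ν (Fin.last r) ℓ.castSucc else 0)
    + (if (ℓ : ℕ) = 0 then P μ ν k.castSucc (Fin.last r) else 0)
    + (if (k : ℕ) = 0 ∧ (ℓ : ℕ) = 0 then P μ ν (Fin.last r) (Fin.last r) else 0)

/-!
Values of `I'` for `n`-chotomic correlations are bounded below by `1 / n`, while general quantum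
correlations bring `I'` arbitrarily close to `0`.

*Lower bound.* Bob's outcome `ℓ ≥ t` in setting 1 forces one of `k < ℓ` (settings 1,1), `k > ℓ`
(settings 1,2), `k < ℓ` (settings 2,2), `k ≥ ℓ` (settings 2,1), or else `ℓ > t` in setting 1 again;
here no-signaling is what allows the partner's setting to be changed along the cycle. Hence `I'(P)`
bounds the probability of each single outcome `t`. If Bob has at most `n` outcomes, these
probabilities sum to one, so `1 ≤ n * I'(P)`, and this is preserved by mixtures.

*Upper bound.* For the Schmidt vector `∑ cᵢ |i i⟩` in dimension `d` and Fourier measurements whose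
phases interlace at quarter steps, `I'` equals
`2 ∑ cᵢ² - ∑ cᵢ cⱼ / (d cos (π (i - j) / 2d))`. Between the two ends of `{0, …, d - 1}` the kernel
is at least `2 / π` times the Hilbert matrix `1 / (a + b + 1)`. The weights `1 / √(a + 1)` show that
the Hilbert matrix has norm at least `π`; placed at both ends, they make the quotient of the two
sums tend to `2`.
-/

section EventMass

variable {ι κ M N : Type*} [Fintype ι] [Fintype κ]

/-- The total weight that `f` gives to the pairs related by `R`; for a joint distribution `f` of
two outcomes this is the probability of the event `R`. The values may lie in any additive monoid, so
that the same notation serves for probabilities, amplitudes and measurement operators. -/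
def eventMass [AddCommMonoid M] (f : ι → κ → M) (R : ι → κ → Prop) [DecidableRel R] : M :=
  ∑ k, ∑ l, if R k l then f k l else 0

theorem map_eventMass [AddCommMonoid M] [AddCommMonoid N] (φ : M →+ N) (f : ι → κ → M)
    (R : ι → κ → Prop) [DecidableRel R] :
    φ (eventMass f R) = eventMass (fun k l => φ (f k l)) R := by
  simp only [eventMass, map_sum, apply_ite φ, map_zero]

theorem eventMass_mul_left [NonUnitalNonAssocSemiring M] (a : M) (f : ι → κ → M)
    (R : ι → κ → Prop) [DecidableRel R] :
    eventMass (fun k l => a * f k l) R = a * eventMass f R :=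
  (map_eventMass (AddMonoidHom.mulLeft a) f R).symm

theorem eventMass_sum [AddCommMonoid M] {α : Type*} (s : Finset α) (f : α → ι → κ → M)
    (R : ι → κ → Prop) [DecidableRel R] :
    eventMass (fun k l => ∑ i ∈ s, f i k l) R = ∑ i ∈ s, eventMass (f i) R := by
  simp only [eventMass, Finset.sum_comm (s := s)]
  refine Finset.sum_congr rfl fun k _ => Finset.sum_congr rfl fun l _ => ?_
  split_ifs
  · rfl
  · exact Finset.sum_const_zero.symm

theorem eventMass_swap [AddCommMonoid M] (f : ι → κ → M) (R : κ → ι → Prop) [DecidableRel R] :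
    eventMass f (fun k l => R l k) = eventMass (fun l k => f k l) R :=
  Finset.sum_comm

theorem eventMass_true [AddCommMonoid M] (f : ι → κ → M) :
    eventMass f (fun _ _ => True) = ∑ k, ∑ l, f k l := by
  simp only [eventMass, if_true]

theorem eventMass_eq_add_of_disjoint [AddCommMonoid M] (f : ι → κ → M) {R S T : ι → κ → Prop}
    [DecidableRel R] [DecidableRel S] [DecidableRel T] (h : ∀ k l, R k l ↔ S k l ∨ T k l)
    (hST : ∀ k l, S k l → ¬ T k l) :
    eventMass f R = eventMass f S + eventMass f T := by
  simp only [eventMass, ← Finset.sum_add_distrib]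
  refine Finset.sum_congr rfl fun k _ => Finset.sum_congr rfl fun l _ => ?_
  by_cases hS : S k l
  · simp [h, hS, hST k l hS]
  · simp [h, hS]

section Order

variable [AddCommMonoid M] [PartialOrder M] [IsOrderedAddMonoid M] {f : ι → κ → M}

theorem eventMass_nonneg (hf : ∀ k l, 0 ≤ f k l) (R : ι → κ → Prop) [DecidableRel R] :
    0 ≤ eventMass f R :=
  Finset.sum_nonneg fun k _ => Finset.sum_nonneg fun l _ => ite_nonneg (hf k l) le_rfl

theorem eventMass_le_add (hf : ∀ k l, 0 ≤ f k l) {R S T : ι → κ → Prop} [DecidableRel R]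
    [DecidableRel S] [DecidableRel T] (h : ∀ k l, R k l → S k l ∨ T k l) :
    eventMass f R ≤ eventMass f S + eventMass f T := by
  simp only [eventMass, ← Finset.sum_add_distrib]
  refine Finset.sum_le_sum fun k _ => Finset.sum_le_sum fun l _ => ?_
  have hnonneg (Q : Prop) [Decidable Q] : 0 ≤ if Q then f k l else 0 := ite_nonneg (hf k l) le_rfl
  by_cases hR : R k l
  · rcases h k l hR with hS | hT
    · simpa only [hR, hS, if_true] using le_add_of_nonneg_right (hnonneg (T k l))
    · simpa only [hR, hT, if_true] using le_add_of_nonneg_left (hnonneg (S k l))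
  · simpa only [hR, if_false] using add_nonneg (hnonneg (S k l)) (hnonneg (T k l))

end Order

end EventMass

section LowerBound

variable {r : ℕ} {P : Fin 2 → Fin 2 → Fin r → Fin r → ℝ}

theorem ZG_eq_eventMass (P : Fin 2 → Fin 2 → Fin r → Fin r → ℝ) :
    ZG P = eventMass (P 1 1) (fun k l => k < l) + eventMass (P 0 1) (fun k l => l < k)
      + eventMass (P 0 0) (fun k l => k < l) + eventMass (P 1 0) (fun k l => l ≤ k) :=
  rfl

theorem ZG_nonneg (hP : ∀ μ ν k l, 0 ≤ P μ ν k l) : 0 ≤ ZG P := by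
  rw [ZG_eq_eventMass]
  have h (μ ν) := eventMass_nonneg (hP μ ν)
  exact add_nonneg (add_nonneg (add_nonneg (h ..) (h ..)) (h ..)) (h ..)

theorem ZG_sum {α : Type*} (s : Finset α) (P : α → Fin 2 → Fin 2 → Fin r → Fin r → ℝ) :
    ZG (fun μ ν k l => ∑ i ∈ s, P i μ ν k l) = ∑ i ∈ s, ZG (P i) := by
  simp only [ZG_eq_eventMass, eventMass_sum, Finset.sum_add_distrib]

theorem NoSignaling.eventMass_left_congr (h : NoSignaling r P) (μ ν ν' : Fin 2) (p : Fin r → Prop)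
    [DecidablePred p] :
    eventMass (P μ ν) (fun k _ => p k) = eventMass (P μ ν') (fun k _ => p k) := by
  have hμ (ν k) : ∑ l, P μ ν k l = ∑ l, P μ 0 k l := by
    fin_cases ν
    exacts [rfl, (h.1 μ k).symm]
  simp only [eventMass, Finset.sum_ite_irrel, Finset.sum_const_zero, hμ]

theorem NoSignaling.eventMass_right_congr (h : NoSignaling r P) (μ μ' ν : Fin 2) (p : Fin r → Prop)
    [DecidablePred p] :
    eventMass (P μ ν) (fun _ l => p l) = eventMass (P μ' ν) (fun _ l => p l) := by
  have hν (μ l) : ∑ k, P μ ν k l = ∑ k, P 0 ν k l := by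
    fin_cases μ
    exacts [rfl, (h.2 ν l).symm]
  simp only [eventMass_swap _ fun l _ => p l]
  simp only [eventMass, Finset.sum_ite_irrel, Finset.sum_const_zero, hν]

theorem NoSignaling.eventMass_le_add_ZG (h : NoSignaling r P) (hP : ∀ μ ν k l, 0 ≤ P μ ν k l)
    (t : Fin r) :
    eventMass (P 0 0) (fun _ l => t ≤ l) ≤ eventMass (P 0 0) (fun _ l => t < l) + ZG P := by
  calc eventMass (P 0 0) (fun _ l => t ≤ l)
      ≤ eventMass (P 0 0) (fun k _ => t ≤ k) + eventMass (P 0 0) (fun k l => k < l) :=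
        eventMass_le_add (hP 0 0) fun k l hl => by grind
    _ = eventMass (P 0 1) (fun k _ => t ≤ k) + eventMass (P 0 0) (fun k l => k < l) := by
        rw [h.eventMass_left_congr 0 0 1]
    _ ≤ eventMass (P 0 1) (fun _ l => t ≤ l) + eventMass (P 0 1) (fun k l => l < k)
          + eventMass (P 0 0) (fun k l => k < l) := by
        gcongr
        exact eventMass_le_add (hP 0 1) fun k l hk => by grind
    _ = eventMass (P 1 1) (fun _ l => t ≤ l) + eventMass (P 0 1) (fun k l => l < k)
          + eventMass (P 0 0) (fun k l => k < l) := by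
        rw [h.eventMass_right_congr 0 1 1]
    _ ≤ eventMass (P 1 1) (fun k _ => t ≤ k) + eventMass (P 1 1) (fun k l => k < l)
          + eventMass (P 0 1) (fun k l => l < k) + eventMass (P 0 0) (fun k l => k < l) := by
        gcongr
        exact eventMass_le_add (hP 1 1) fun k l hl => by grind
    _ = eventMass (P 1 0) (fun k _ => t ≤ k) + eventMass (P 1 1) (fun k l => k < l)
          + eventMass (P 0 1) (fun k l => l < k) + eventMass (P 0 0) (fun k l => k < l) := by
        rw [h.eventMass_left_congr 1 1 0]
    _ ≤ eventMass (P 1 0) (fun _ l => t < l) + eventMass (P 1 0) (fun k l => l ≤ k)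
          + eventMass (P 1 1) (fun k l => k < l) + eventMass (P 0 1) (fun k l => l < k)
          + eventMass (P 0 0) (fun k l => k < l) := by
        gcongr
        exact eventMass_le_add (hP 1 0) fun k l hk => by grind
    _ = eventMass (P 0 0) (fun _ l => t < l) + ZG P := by
        rw [h.eventMass_right_congr 1 0 0, ZG_eq_eventMass]
        ring

theorem NoSignaling.sum_le_ZG (h : NoSignaling r P) (hP : ∀ μ ν k l, 0 ≤ P μ ν k l) (t : Fin r) :
    ∑ k, P 0 0 k t ≤ ZG P := by
  have split : eventMass (P 0 0) (fun _ l => t ≤ l) =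
      eventMass (P 0 0) (fun _ l => t < l) + eventMass (P 0 0) (fun _ l => t = l) :=
    eventMass_eq_add_of_disjoint _ (fun _ _ => le_iff_lt_or_eq) fun _ _ => ne_of_lt
  have single : eventMass (P 0 0) (fun _ l => t = l) = ∑ k, P 0 0 k t := by
    simp only [eventMass, Finset.sum_ite_eq, Finset.mem_univ, if_true]
  linarith [h.eventMass_le_add_ZG hP t]

theorem NoSignaling.sum_le_card_mul_ZG (h : NoSignaling r P) (hP : ∀ μ ν k l, 0 ≤ P μ ν k l)
    (s : Finset (Fin r)) (hs : ∀ k, ∀ l ∉ s, P 0 0 k l = 0) :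
    ∑ k, ∑ l, P 0 0 k l ≤ s.card * ZG P := by
  calc ∑ k, ∑ l, P 0 0 k l = ∑ l, ∑ k, P 0 0 k l := Finset.sum_comm
    _ = ∑ l ∈ s, ∑ k, P 0 0 k l := by
        refine (Finset.sum_subset s.subset_univ fun l _ hl => ?_).symm
        exact Finset.sum_eq_zero fun k _ => hs k l hl
    _ ≤ s.card • ZG P := Finset.sum_le_card_nsmul _ _ _ fun l _ => h.sum_le_ZG hP l
    _ = s.card * ZG P := nsmul_eq_mul ..

end LowerBound

section BornRule

theorem trace_mul_nonneg_of_posSemidef {𝕜 ι : Type*} [RCLike 𝕜] [Fintype ι] {A B : Matrix ι ι 𝕜}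
    (hA : A.PosSemidef) (hB : B.PosSemidef) : 0 ≤ (A * B).trace := by
  classical
  obtain ⟨m, v, rfl⟩ := Matrix.posSemidef_iff_eq_sum_vecMulVec.mp hA
  rw [Finset.sum_mul, Matrix.trace_sum]
  refine Finset.sum_nonneg fun i _ => ?_
  rw [Matrix.vecMulVec_mul, Matrix.trace_vecMulVec, dotProduct_comm, ← Matrix.dotProduct_mulVec]
  exact hB.dotProduct_mulVec_nonneg _

section Bilinear

variable {R ι κ α : Type*} [CommSemiring R] [Fintype ι] [Fintype κ]
  (η : Matrix (ι × κ) (ι × κ) R) (s : Finset α)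

theorem trace_mul_sum_kronecker (A : α → Matrix ι ι R) (B : Matrix κ κ R) :
    (η * ((∑ k ∈ s, A k) ⊗ₖ B)).trace = ∑ k ∈ s, (η * (A k ⊗ₖ B)).trace := by
  rw [← Matrix.trace_sum, ← Finset.mul_sum]
  congr 2
  ext
  simp only [Matrix.kroneckerMap_apply, Matrix.sum_apply, Finset.sum_mul]

theorem trace_mul_kronecker_sum (A : Matrix ι ι R) (B : α → Matrix κ κ R) :
    (η * (A ⊗ₖ ∑ l ∈ s, B l)).trace = ∑ l ∈ s, (η * (A ⊗ₖ B l)).trace := by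
  rw [← Matrix.trace_sum, ← Finset.mul_sum]
  congr 2
  ext
  simp only [Matrix.kroneckerMap_apply, Matrix.sum_apply, Finset.mul_sum]

end Bilinear

/-- A positive operator-valued measure with finitely many outcomes, the general form of a quantum
measurement. -/
structure IsPOVM {κ ι : Type*} [Fintype κ] [DecidableEq ι] (D : κ → Matrix ι ι ℂ) : Prop where
  posSemidef : ∀ k, (D k).PosSemidef
  sum_eq_one : ∑ k, D k = 1

theorem IsPOVM.transpose {κ ι : Type*} [Fintype κ] [DecidableEq ι] {D : κ → Matrix ι ι ℂ}
    (hD : IsPOVM D) : IsPOVM fun k => (D k)ᵀ where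
  posSemidef k := (hD.posSemidef k).transpose
  sum_eq_one := by rw [← Matrix.transpose_sum, hD.sum_eq_one, Matrix.transpose_one]

variable {ι κ : Type*} [Fintype ι] [Fintype κ] {r : ℕ}
  {η : Matrix (ι × κ) (ι × κ) ℂ} {A : Fin 2 → Fin r → Matrix ι ι ℂ}
  {B : Fin 2 → Fin r → Matrix κ κ ℂ}

/-- The outcome probabilities that the Born rule assigns to the state `η` and the measurements
`A μ` and `B ν`. Taking real parts makes this a real-valued family for arbitrary matrices; for
positive semidefinite ones nothing is lost, see `ofReal_bornCorrelation`. -/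
def bornCorrelation (η : Matrix (ι × κ) (ι × κ) ℂ) (A : Fin 2 → Fin r → Matrix ι ι ℂ)
    (B : Fin 2 → Fin r → Matrix κ κ ℂ) (μ ν : Fin 2) (k l : Fin r) : ℝ :=
  (η * (A μ k ⊗ₖ B ν l)).trace.re

/-- The observable whose expectation in a state is the value of `ZG` on the correlation that the
measurements `A μ` and `B ν` produce from this state. -/
def bellOperator (A : Fin 2 → Fin r → Matrix ι ι ℂ) (B : Fin 2 → Fin r → Matrix κ κ ℂ) :
    Matrix (ι × κ) (ι × κ) ℂ :=
  eventMass (fun k l => A 1 k ⊗ₖ B 1 l) (fun k l => k < l)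
    + eventMass (fun k l => A 0 k ⊗ₖ B 1 l) (fun k l => l < k)
    + eventMass (fun k l => A 0 k ⊗ₖ B 0 l) (fun k l => k < l)
    + eventMass (fun k l => A 1 k ⊗ₖ B 0 l) (fun k l => l ≤ k)

theorem ZG_bornCorrelation (η : Matrix (ι × κ) (ι × κ) ℂ) (A : Fin 2 → Fin r → Matrix ι ι ℂ)
    (B : Fin 2 → Fin r → Matrix κ κ ℂ) :
    ZG (bornCorrelation η A B) = (η * bellOperator A B).trace.re := by
  let expectation : Matrix (ι × κ) (ι × κ) ℂ →+ ℝ :=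
    Complex.reAddGroupHom.comp
      ((Matrix.traceAddMonoidHom (ι × κ) ℂ).comp (AddMonoidHom.mulLeft η))
  change _ = expectation (bellOperator A B)
  simp only [bellOperator, map_add, map_eventMass]
  rfl

theorem bornCorrelation_nonneg (hη : η.PosSemidef) (hA : ∀ μ k, (A μ k).PosSemidef)
    (hB : ∀ ν l, (B ν l).PosSemidef) (μ ν : Fin 2) (k l : Fin r) :
    0 ≤ bornCorrelation η A B μ ν k l :=
  (Complex.le_def.mp (trace_mul_nonneg_of_posSemidef hη ((hA μ k).kronecker (hB ν l)))).1

theorem ofReal_bornCorrelation (hη : η.PosSemidef) (hA : ∀ μ k, (A μ k).PosSemidef)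
    (hB : ∀ ν l, (B ν l).PosSemidef) (μ ν : Fin 2) (k l : Fin r) :
    (bornCorrelation η A B μ ν k l : ℂ) = (η * (A μ k ⊗ₖ B ν l)).trace :=
  (Complex.eq_re_of_ofReal_le
    (trace_mul_nonneg_of_posSemidef hη ((hA μ k).kronecker (hB ν l)))).symm

theorem sum_bornCorrelation_right [DecidableEq κ] {ν : Fin 2} (hB : ∑ l, B ν l = 1) (μ : Fin 2)
    (k : Fin r) :
    ∑ l, bornCorrelation η A B μ ν k l = (η * (A μ k ⊗ₖ (1 : Matrix κ κ ℂ))).trace.re := by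
  simp only [bornCorrelation, ← hB, trace_mul_kronecker_sum, Complex.re_sum]

theorem sum_bornCorrelation_left [DecidableEq ι] {μ : Fin 2} (hA : ∑ k, A μ k = 1) (ν : Fin 2)
    (l : Fin r) :
    ∑ k, bornCorrelation η A B μ ν k l = (η * ((1 : Matrix ι ι ℂ) ⊗ₖ B ν l)).trace.re := by
  simp only [bornCorrelation, ← hA, trace_mul_sum_kronecker, Complex.re_sum]

theorem noSignaling_bornCorrelation [DecidableEq ι] [DecidableEq κ] (hA : ∀ μ, ∑ k, A μ k = 1)
    (hB : ∀ ν, ∑ l, B ν l = 1) : NoSignaling r (bornCorrelation η A B) := by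
  refine ⟨fun μ k => ?_, fun ν l => ?_⟩
  · simp only [sum_bornCorrelation_right (hB _)]
  · simp only [sum_bornCorrelation_left (hA _)]

theorem isCorrelation_bornCorrelation [DecidableEq ι] [DecidableEq κ] (hη : η.PosSemidef)
    (hη1 : η.trace = 1) (hA : ∀ μ, IsPOVM (A μ)) (hB : ∀ ν, IsPOVM (B ν)) :
    IsCorrelation r (bornCorrelation η A B) := by
  refine ⟨bornCorrelation_nonneg hη (fun μ => (hA μ).posSemidef) fun ν => (hB ν).posSemidef,
    fun μ ν => ?_⟩
  simp only [sum_bornCorrelation_right (hB ν).sum_eq_one, ← Complex.re_sum,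
    ← trace_mul_sum_kronecker, (hA μ).sum_eq_one, Matrix.one_kronecker_one, mul_one, hη1,
    Complex.one_re]

theorem sum_bornCorrelation_le_mul_ZG [DecidableEq ι] [DecidableEq κ] {n : ℕ} (hη : η.PosSemidef)
    (hA : ∀ μ, IsPOVM (A μ)) (hB : ∀ ν, IsPOVM (B ν)) (hn : {l | B 0 l ≠ 0}.ncard ≤ n) :
    ∑ k, ∑ l, bornCorrelation η A B 0 0 k l ≤ n * ZG (bornCorrelation η A B) := by
  classical
  have hns : NoSignaling r (bornCorrelation η A B) :=
    noSignaling_bornCorrelation (fun μ => (hA μ).sum_eq_one) fun ν => (hB ν).sum_eq_one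
  have hpos (μ ν k l) : 0 ≤ bornCorrelation η A B μ ν k l :=
    bornCorrelation_nonneg hη (fun μ => (hA μ).posSemidef) (fun ν => (hB ν).posSemidef) μ ν k l
  have hsupp : ∀ k, ∀ l ∉ {l | B 0 l ≠ 0}.toFinset, bornCorrelation η A B 0 0 k l = 0 := by
    intro k l hl
    have hl0 : B 0 l = 0 := by simpa using hl
    simp [bornCorrelation, hl0]
  refine (hns.sum_le_card_mul_ZG hpos _ hsupp).trans ?_
  rw [Set.ncard_eq_toFinset_card'] at hn
  gcongr
  exact ZG_nonneg hpos

end BornRule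

theorem isNChotomicQC_bornCorrelation {n r dA dB : ℕ} (hn : r ≤ n) (hdA : 1 ≤ dA) (hdB : 1 ≤ dB)
    {η : Matrix (Fin dA × Fin dB) (Fin dA × Fin dB) ℂ}
    {A : Fin 2 → Fin r → Matrix (Fin dA) (Fin dA) ℂ}
    {B : Fin 2 → Fin r → Matrix (Fin dB) (Fin dB) ℂ} (hη : η.PosSemidef) (hη1 : η.trace = 1)
    (hA : ∀ μ, IsPOVM (A μ)) (hB : ∀ ν, IsPOVM (B ν)) :
    IsNChotomicQC n r (bornCorrelation η A B) := by
  have hcard (s : Set (Fin r)) : s.ncard ≤ n :=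
    ((Set.ncard_le_card s).trans (Nat.card_fin r).le).trans hn
  refine ⟨isCorrelation_bornCorrelation hη hη1 hA hB, 1, dA, dB, hdA, hdB, fun _ => η,
    fun μ _ => A μ, fun ν _ => B ν, fun _ => hη, by simpa using hη1,
    fun μ _ => (hA μ).posSemidef, fun μ _ => (hA μ).sum_eq_one, fun _ _ => hcard _,
    fun ν _ => (hB ν).posSemidef, fun ν _ => (hB ν).sum_eq_one, fun _ _ => hcard _,
    fun μ ν k l => ?_⟩
  simpa using ofReal_bornCorrelation hη (fun μ => (hA μ).posSemidef)
    (fun ν => (hB ν).posSemidef) μ ν k l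

theorem IsNChotomicQC.one_le_mul_ZG {n r : ℕ} {P : Fin 2 → Fin 2 → Fin r → Fin r → ℝ}
    (h : IsNChotomicQC n r P) : 1 ≤ n * ZG P := by
  obtain ⟨hcorr, a, dA, dB, -, -, η, DA, DB, hη, -, hA, hA1, -, hB, hB1, hBn, hborn⟩ := h
  let p (α : Fin a) := bornCorrelation (η α) (fun μ => DA μ α) (fun ν => DB ν α)
  have hP : P = fun μ ν k l => ∑ α, p α μ ν k l := by
    funext μ ν k l
    rw [← Complex.ofReal_re (P μ ν k l), hborn, Complex.re_sum]
    rfl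
  calc (1 : ℝ) = ∑ k, ∑ l, P 0 0 k l := (hcorr.2 0 0).symm
    _ = ∑ α, ∑ k, ∑ l, p α 0 0 k l := by
        simp only [hP, Finset.sum_comm (t := (Finset.univ : Finset (Fin a)))]
    _ ≤ ∑ α, n * ZG (p α) := Finset.sum_le_sum fun α _ =>
        sum_bornCorrelation_le_mul_ZG (hη α) (fun μ => ⟨hA μ α, hA1 μ α⟩)
          (fun ν => ⟨hB ν α, hB1 ν α⟩) (hBn 0 α)
    _ = n * ZG P := by rw [hP, ZG_sum, Finset.mul_sum]

section SchmidtState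

variable {ι : Type*} [DecidableEq ι]

/-- The vector `∑ cᵢ |i i⟩` with Schmidt coefficients `c` in the standard basis. -/
def schmidtVector (c : ι → ℝ) : ι × ι → ℂ :=
  Matrix.vec (Matrix.diagonal fun i => (c i : ℂ))

/-- The density matrix of `schmidtVector c`, normalised only if `∑ cᵢ² = 1`. -/
def schmidtState (c : ι → ℝ) : Matrix (ι × ι) (ι × ι) ℂ :=
  Matrix.vecMulVec (schmidtVector c) (star (schmidtVector c))

theorem posSemidef_schmidtState [Finite ι] (c : ι → ℝ) : (schmidtState c).PosSemidef :=
  Matrix.posSemidef_vecMulVec_self_star _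

variable [Fintype ι]

theorem trace_schmidtState_mul (c : ι → ℝ) (M : Matrix (ι × ι) (ι × ι) ℂ) :
    (schmidtState c * M).trace = ∑ i, ∑ j, (c i : ℂ) * c j * M (i, i) (j, j) := by
  rw [schmidtState, Matrix.vecMulVec_mul, Matrix.trace_vecMulVec, dotProduct_comm,
    ← Matrix.dotProduct_mulVec]
  simp only [dotProduct, Matrix.mulVec, Fintype.sum_prod_type, schmidtVector, Matrix.vec,
    Matrix.diagonal_apply, Pi.star_apply, apply_ite star, star_zero, ite_mul, zero_mul, mul_ite,
    mul_zero, Finset.sum_ite_eq', Finset.mem_univ, if_true, Complex.star_def,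
    Complex.conj_ofReal]
  refine Finset.sum_congr rfl fun i _ => ?_
  rw [Finset.mul_sum]
  exact Finset.sum_congr rfl fun j _ => by ring

theorem trace_schmidtState (c : ι → ℝ) : (schmidtState c).trace = (∑ i, c i ^ 2 : ℝ) := by
  rw [← mul_one (schmidtState c), trace_schmidtState_mul]
  simp [Matrix.one_apply, sq]

end SchmidtState

section GeometricSums

theorem eventMass_lt_eq_sum_range {M : Type*} [AddCommMonoid M] (d : ℕ) (f : ℕ → ℕ → M) :
    eventMass (fun k l : Fin d => f k l) (fun k l => k < l) =
      ∑ l ∈ Finset.range d, ∑ k ∈ Finset.range l, f k l := by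
  rw [eventMass, Finset.sum_comm, ← Fin.sum_univ_eq_sum_range]
  refine Finset.sum_congr rfl fun l _ => ?_
  have hfilter : (Finset.range d).filter (· < (l : ℕ)) = Finset.range l := by
    ext k
    have := l.isLt
    grind
  rw [← hfilter, Finset.sum_filter, ← Fin.sum_univ_eq_sum_range]
  rfl

theorem two_mul_eventMass_lt_one (R : Type*) [CommRing R] (d : ℕ) :
    2 * eventMass (fun _ _ : Fin d => (1 : R)) (fun k l => k < l) = (d : R) ^ 2 - d := by
  rw [eventMass_lt_eq_sum_range d fun _ _ => (1 : R)]
  simp only [Finset.sum_const, Finset.card_range, nsmul_one]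
  induction d with
  | zero => simp
  | succ d ih =>
    rw [Finset.sum_range_succ, mul_add, ih]
    push_cast
    ring

variable {K : Type*} [Field K] {d : ℕ} {x : K}

theorem eventMass_lt_pow_mul_inv_pow (hx : x ≠ 1) (hxd : x ^ d = 1) :
    eventMass (fun k l : Fin d => x ^ (k : ℕ) * x⁻¹ ^ (l : ℕ)) (fun k l => k < l) =
      d / (x - 1) := by
  rcases eq_or_ne d 0 with rfl | hd
  · simp [eventMass]
  have hx0 : x ≠ 0 := by
    rintro rfl
    simp [hd] at hxd
  have hterm (l : ℕ) : (∑ k ∈ Finset.range l, x ^ k) * x⁻¹ ^ l = (1 - x⁻¹ ^ l) / (x - 1) := by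
    rw [geom_sum_eq hx, div_mul_eq_mul_div, sub_mul, ← mul_pow, mul_inv_cancel₀ hx0, one_pow,
      one_mul]
  have hinv : ∑ l ∈ Finset.range d, x⁻¹ ^ l = 0 := by
    rw [geom_sum_eq (by simpa using hx), inv_pow, hxd, inv_one, sub_self, zero_div]
  rw [eventMass_lt_eq_sum_range d fun k l => x ^ k * x⁻¹ ^ l]
  simp only [← Finset.sum_mul, hterm, ← Finset.sum_div, Finset.sum_sub_distrib, hinv]
  simp

theorem eventMass_gt_pow_mul_inv_pow (x : K) :
    eventMass (fun k l : Fin d => x ^ (k : ℕ) * x⁻¹ ^ (l : ℕ)) (fun k l => l < k) =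
      eventMass (fun k l : Fin d => x⁻¹ ^ (k : ℕ) * x⁻¹⁻¹ ^ (l : ℕ)) (fun k l => k < l) := by
  rw [eventMass_swap _ fun k l => k < l]
  simp only [inv_inv, mul_comm]

theorem eventMass_ge_pow_mul_inv_pow (x : K) :
    eventMass (fun k l : Fin d => x ^ (k : ℕ) * x⁻¹ ^ (l : ℕ)) (fun k l => l ≤ k) =
      (∑ k : Fin d, x ^ (k : ℕ)) * ∑ l : Fin d, x⁻¹ ^ (l : ℕ) -
        eventMass (fun k l : Fin d => x ^ (k : ℕ) * x⁻¹ ^ (l : ℕ)) (fun k l => k < l) := by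
  rw [Finset.sum_mul_sum, ← eventMass_true, eq_sub_iff_add_eq]
  exact (eventMass_eq_add_of_disjoint _ (fun k l => by simp [le_or_gt])
    fun _ _ => not_lt_of_ge).symm

/-- The coefficient with which the Fourier basis states `(i, i)` and `(j, j)` enter `ZG`, up to the
factor `d²`, as a function of `y = fourierPhase i j`. -/
def bellKernel (d : ℕ) (y : K) : K :=
  y * eventMass (fun k l : Fin d => (y ^ 4) ^ (k : ℕ) * (y ^ 4)⁻¹ ^ (l : ℕ)) (fun k l => k < l)
  + y⁻¹ * eventMass (fun k l : Fin d => (y ^ 4) ^ (k : ℕ) * (y ^ 4)⁻¹ ^ (l : ℕ)) (fun k l => l < k)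
  + y * eventMass (fun k l : Fin d => (y ^ 4) ^ (k : ℕ) * (y ^ 4)⁻¹ ^ (l : ℕ)) (fun k l => k < l)
  + y ^ 3 * eventMass (fun k l : Fin d => (y ^ 4) ^ (k : ℕ) * (y ^ 4)⁻¹ ^ (l : ℕ))
      (fun k l => l ≤ k)

theorem bellKernel_one (K : Type*) [Field K] (d : ℕ) : bellKernel d (1 : K) = 2 * d ^ 2 - d := by
  have hlt := two_mul_eventMass_lt_one K d
  rw [bellKernel, eventMass_gt_pow_mul_inv_pow, eventMass_ge_pow_mul_inv_pow]
  simp only [inv_one, one_pow, one_mul, Finset.sum_const, Finset.card_univ, Fintype.card_fin,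
    nsmul_one]
  linear_combination hlt

theorem bellKernel_of_ne_one {y : K} (hy : y ^ 4 ≠ 1) (hyd : (y ^ 4) ^ d = 1) :
    bellKernel d y = -(2 * d / (y + y⁻¹)) := by
  rcases eq_or_ne d 0 with rfl | hd
  · simp [bellKernel, eventMass]
  have hy0 : y ≠ 0 := by
    rintro rfl
    simp [hd] at hyd
  have hinv : (y ^ 4)⁻¹ ≠ 1 := by rwa [Ne, inv_eq_one]
  have hinvd : (y ^ 4)⁻¹ ^ d = 1 := by rw [inv_pow, hyd, inv_one]
  have hsum : ∑ k : Fin d, (y ^ 4) ^ (k : ℕ) = 0 := by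
    rw [Fin.sum_univ_eq_sum_range fun k => (y ^ 4) ^ k, geom_sum_eq hy, hyd, sub_self, zero_div]
  rw [bellKernel, eventMass_gt_pow_mul_inv_pow, eventMass_ge_pow_mul_inv_pow, hsum, zero_mul,
    eventMass_lt_pow_mul_inv_pow hy hyd, eventMass_lt_pow_mul_inv_pow hinv hinvd]
  have hfactor : y ^ 4 - 1 = (y ^ 2 - 1) * (y ^ 2 + 1) := by ring
  obtain ⟨hsub, hadd⟩ := mul_ne_zero_iff.mp (hfactor ▸ sub_ne_zero.mpr hy)
  have hinv_sub : (y ^ 4)⁻¹ - 1 = -((y ^ 2 - 1) * (y ^ 2 + 1)) / y ^ 4 := by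
    field_simp
    ring
  have hadd_inv : y + y⁻¹ = (y ^ 2 + 1) / y := by field_simp
  rw [hinv_sub, hadd_inv, hfactor]
  field_simp
  ring

end GeometricSums

section FourierMeasurements

variable {d : ℕ}

/-- A quarter of the angle between the `d`-th roots of unity numbered `i` and `j`. -/
def fourierAngle (i j : Fin d) : ℝ :=
  Real.pi * ((i : ℕ) - (j : ℕ)) / (2 * d)

theorem fourierAngle_self (i : Fin d) : fourierAngle i i = 0 := by
  simp [fourierAngle]

theorem fourierAngle_swap (i j : Fin d) : fourierAngle j i = -fourierAngle i j := by
  simp only [fourierAngle]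
  ring

/-- The point of the unit circle at the angle `fourierAngle i j`. -/
def fourierPhase (i j : Fin d) : ℂ :=
  Complex.exp (fourierAngle i j * Complex.I)

theorem fourierPhase_self (i : Fin d) : fourierPhase i i = 1 := by
  simp [fourierPhase, fourierAngle_self]

theorem fourierPhase_pow_four (i j : Fin d) :
    fourierPhase i j ^ 4 = Complex.exp (2 * Real.pi * Complex.I / d) ^ (i : ℕ) /
      Complex.exp (2 * Real.pi * Complex.I / d) ^ (j : ℕ) := by
  simp only [fourierPhase, fourierAngle, ← Complex.exp_nat_mul, ← Complex.exp_sub]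
  congr 1
  push_cast
  ring

theorem fourierPhase_pow_four_pow (i j : Fin d) : (fourierPhase i j ^ 4) ^ d = 1 := by
  rw [fourierPhase_pow_four, div_pow, pow_right_comm, pow_right_comm _ (j : ℕ),
    (Complex.isPrimitiveRoot_exp d i.pos.ne').pow_eq_one, one_pow, one_pow, div_one]

theorem fourierPhase_pow_four_ne_one {i j : Fin d} (hij : i ≠ j) : fourierPhase i j ^ 4 ≠ 1 := by
  rw [fourierPhase_pow_four, Ne, div_eq_one_iff_eq (pow_ne_zero _ (Complex.exp_ne_zero _))]
  exact fun h => hij (Fin.ext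
    ((Complex.isPrimitiveRoot_exp d i.pos.ne').pow_inj i.isLt j.isLt h))

theorem sum_fourierPhase_pow (i j : Fin d) :
    ∑ k : Fin d, (fourierPhase i j ^ 4) ^ (k : ℕ) = if i = j then (d : ℂ) else 0 := by
  split_ifs with hij
  · simp [hij, fourierPhase_self]
  · rw [Fin.sum_univ_eq_sum_range fun k => (fourierPhase i j ^ 4) ^ k,
      geom_sum_eq (fourierPhase_pow_four_ne_one hij), fourierPhase_pow_four_pow, sub_self, zero_div]

/-- The Fourier vector of dimension `d` whose frequency `s` need not be an integer. -/
def fourierVector (d : ℕ) (s : ℝ) (j : Fin d) : ℂ :=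
  Complex.exp (2 * Real.pi * (j : ℕ) * s / d * Complex.I) / (√d : ℝ)

/-- The projective measurement onto the Fourier vectors with the frequencies `s`, `s + 1`, …,
`s + d - 1`. -/
def fourierMeasurement (d : ℕ) (s : ℝ) (k : Fin d) : Matrix (Fin d) (Fin d) ℂ :=
  Matrix.vecMulVec (fourierVector d ((k : ℕ) + s)) (star (fourierVector d ((k : ℕ) + s)))

theorem fourierMeasurement_apply (s : ℝ) (k i j : Fin d) :
    fourierMeasurement d s k i j =
      Complex.exp (4 * s * (fourierAngle i j * Complex.I)) *
        (fourierPhase i j ^ 4) ^ (k : ℕ) / d := by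
  have hd : ((√(d : ℝ) : ℝ) : ℂ) * (√(d : ℝ) : ℝ) = d := by
    rw [← Complex.ofReal_mul, Real.mul_self_sqrt (Nat.cast_nonneg d), Complex.ofReal_natCast]
  rw [fourierMeasurement, Matrix.vecMulVec_apply, Pi.star_apply, fourierVector, fourierVector,
    star_div₀, Complex.star_def, ← Complex.exp_conj, Complex.conj_ofReal, div_mul_div_comm, hd,
    fourierPhase]
  simp only [← Complex.exp_nat_mul, ← Complex.exp_add, map_mul, map_div₀, Complex.conj_I,
    Complex.conj_ofReal, map_natCast, map_ofNat, fourierAngle]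
  congr 2
  push_cast
  ring

theorem isPOVM_fourierMeasurement (d : ℕ) (s : ℝ) : IsPOVM (fourierMeasurement d s) where
  posSemidef _ := Matrix.posSemidef_vecMulVec_self_star _
  sum_eq_one := by
    ext i j
    have hd : (d : ℂ) ≠ 0 := Nat.cast_ne_zero.mpr i.pos.ne'
    simp only [Matrix.sum_apply, fourierMeasurement_apply, ← Finset.sum_div, ← Finset.mul_sum,
      sum_fourierPhase_pow, Matrix.one_apply]
    split_ifs with hij
    · simp [hij, fourierAngle_self, hd]
    · simp

/-- Alice's measurements, with the offsets `0` and `1 / 2`. -/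
def aliceMeasurement (d : ℕ) (μ : Fin 2) : Fin d → Matrix (Fin d) (Fin d) ℂ :=
  fourierMeasurement d (![0, 1 / 2] μ)

/-- Bob's measurements, with the offsets `-1 / 4` and `1 / 4`. The transposition replaces the
Fourier vectors by their complex conjugates. -/
def bobMeasurement (d : ℕ) (ν : Fin 2) (l : Fin d) : Matrix (Fin d) (Fin d) ℂ :=
  (fourierMeasurement d (![-(1 / 4), 1 / 4] ν) l)ᵀ

theorem isPOVM_aliceMeasurement (d : ℕ) (μ : Fin 2) : IsPOVM (aliceMeasurement d μ) :=
  isPOVM_fourierMeasurement _ _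

theorem isPOVM_bobMeasurement (d : ℕ) (ν : Fin 2) : IsPOVM (bobMeasurement d ν) :=
  (isPOVM_fourierMeasurement _ _).transpose

theorem fourierMeasurement_kronecker_apply (s t : ℝ) (k l i j : Fin d) :
    (fourierMeasurement d s k ⊗ₖ (fourierMeasurement d t l)ᵀ) (i, i) (j, j) =
      Complex.exp (4 * (s - t) * (fourierAngle i j * Complex.I)) / d ^ 2 *
        ((fourierPhase i j ^ 4) ^ (k : ℕ) * (fourierPhase i j ^ 4)⁻¹ ^ (l : ℕ)) := by
  have hphase : fourierPhase j i = (fourierPhase i j)⁻¹ := by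
    simp [fourierPhase, fourierAngle_swap i j, Complex.exp_neg]
  have hexp : Complex.exp (4 * (s - t) * (fourierAngle i j * Complex.I)) =
      Complex.exp (4 * s * (fourierAngle i j * Complex.I)) *
        Complex.exp (4 * t * (fourierAngle j i * Complex.I)) := by
    rw [← Complex.exp_add, fourierAngle_swap i j]
    congr 1
    push_cast
    ring
  rw [Matrix.kroneckerMap_apply, Matrix.transpose_apply, fourierMeasurement_apply,
    fourierMeasurement_apply, hphase, hexp, inv_pow]
  ring

theorem eventMass_fourierMeasurement_kronecker (s t : ℝ) (R : Fin d → Fin d → Prop)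
    [DecidableRel R] (i j : Fin d) :
    eventMass (fun k l => fourierMeasurement d s k ⊗ₖ (fourierMeasurement d t l)ᵀ) R (i, i) (j, j) =
      Complex.exp (4 * (s - t) * (fourierAngle i j * Complex.I)) *
        eventMass (fun k l : Fin d => (fourierPhase i j ^ 4) ^ (k : ℕ) *
          (fourierPhase i j ^ 4)⁻¹ ^ (l : ℕ)) R / d ^ 2 := by
  refine (map_eventMass (Matrix.entryAddMonoidHom ℂ (i, i) (j, j)) _ R).trans ?_
  simp only [Matrix.entryAddMonoidHom_apply, fourierMeasurement_kronecker_apply]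
  rw [eventMass_mul_left, div_mul_eq_mul_div]

theorem bellOperator_fourier_apply (i j : Fin d) :
    bellOperator (aliceMeasurement d) (bobMeasurement d) (i, i) (j, j) =
      bellKernel d (fourierPhase i j) / d ^ 2 := by
  have hexp (n : ℤ) {s t : ℝ} (hst : 4 * (s - t) = n) :
      Complex.exp (4 * (s - t) * (fourierAngle i j * Complex.I)) = fourierPhase i j ^ n := by
    rw [fourierPhase, ← Complex.exp_int_mul]
    congr 2
    exact_mod_cast hst
  simp only [bellOperator, aliceMeasurement, bobMeasurement, Matrix.add_apply,
    eventMass_fourierMeasurement_kronecker]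
  rw [hexp 1 (by norm_num), hexp (-1) (by norm_num), hexp 1 (by norm_num), hexp 3 (by norm_num),
    bellKernel]
  simp only [_root_.zpow_neg_one, zpow_ofNat]
  ring

/-- The matrix `1 / (d cos θ)` with `θ = fourierAngle i j`, whose expectation in the normalised
vector `c` is the amount by which `ZG (fourierCorrelation c)` falls short of `2`. -/
def secKernel (i j : Fin d) : ℝ :=
  1 / (d * Real.cos (fourierAngle i j))

theorem bellKernel_fourierPhase_div (i j : Fin d) :
    bellKernel d (fourierPhase i j) / d ^ 2 = (if i = j then 2 else 0) - (secKernel i j : ℂ) := by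
  have hd : (d : ℂ) ≠ 0 := Nat.cast_ne_zero.mpr i.pos.ne'
  split_ifs with hij
  · subst hij
    rw [fourierPhase_self, bellKernel_one, secKernel, fourierAngle_self, Real.cos_zero]
    push_cast
    field_simp
  · have hcos : fourierPhase i j + (fourierPhase i j)⁻¹ = 2 * Complex.cos (fourierAngle i j) := by
      rw [fourierPhase, ← Complex.exp_neg, ← neg_mul, Complex.two_cos]
    rw [bellKernel_of_ne_one (fourierPhase_pow_four_ne_one hij) (fourierPhase_pow_four_pow i j),
      hcos, secKernel]
    push_cast
    field_simp
    ring

/-- The correlation of the Fourier measurements in `schmidtState c`. -/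
def fourierCorrelation (c : Fin d → ℝ) : Fin 2 → Fin 2 → Fin d → Fin d → ℝ :=
  bornCorrelation (schmidtState c) (aliceMeasurement d) (bobMeasurement d)

theorem isNChotomicQC_fourierCorrelation {n : ℕ} (hd : 1 ≤ d) (hn : d ≤ n) {c : Fin d → ℝ}
    (hc : ∑ i, c i ^ 2 = 1) : IsNChotomicQC n d (fourierCorrelation c) :=
  isNChotomicQC_bornCorrelation hn hd hd (posSemidef_schmidtState c)
    (by rw [trace_schmidtState, hc, Complex.ofReal_one]) (isPOVM_aliceMeasurement d)
    (isPOVM_bobMeasurement d)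

theorem ZG_fourierCorrelation (c : Fin d → ℝ) :
    ZG (fourierCorrelation c) =
      2 * ∑ i, c i ^ 2 - ∑ i, ∑ j, c i * c j * secKernel i j := by
  apply Complex.ofReal_injective
  have hreal : (schmidtState c * bellOperator (aliceMeasurement d) (bobMeasurement d)).trace =
      (2 * ∑ i, c i ^ 2 - ∑ i, ∑ j, c i * c j * secKernel i j : ℝ) := by
    simp only [trace_schmidtState_mul, bellOperator_fourier_apply, bellKernel_fourierPhase_div,
      mul_sub, mul_ite, mul_zero, Finset.sum_sub_distrib, Finset.sum_ite_eq, Finset.mem_univ,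
      if_true, Finset.mul_sum]
    push_cast
    congr 1
    exact Finset.sum_congr rfl fun i _ => by ring
  rw [fourierCorrelation, ZG_bornCorrelation, hreal, Complex.ofReal_re]

theorem exists_isNChotomicQC_ZG_eq (c : Fin d → ℝ) (hc : 0 < ∑ i, c i ^ 2) :
    ∃ P, IsNChotomicQC d d P ∧
      ZG P = 2 - (∑ i, ∑ j, c i * c j * secKernel i j) / ∑ i, c i ^ 2 := by
  have hd : 1 ≤ d := by
    by_contra! h
    obtain rfl : d = 0 := by omega
    simp at hc
  set S := ∑ i, c i ^ 2
  have hnorm : ∑ i, (c i / √S) ^ 2 = 1 := by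
    simp only [div_pow, Real.sq_sqrt hc.le, ← Finset.sum_div]
    exact div_self hc.ne'
  refine ⟨fourierCorrelation fun i => c i / √S, isNChotomicQC_fourierCorrelation hd le_rfl hnorm,
    ?_⟩
  rw [ZG_fourierCorrelation, hnorm, mul_one]
  have hscale (i j : Fin d) :
      c i / √S * (c j / √S) * secKernel i j = c i * c j * secKernel i j / S := by
    rw [div_mul_div_comm, Real.mul_self_sqrt hc.le, div_mul_eq_mul_div]
  simp only [hscale, ← Finset.sum_div]

end FourierMeasurements

section Arctan

theorem arctan_le_self_of_nonneg {x : ℝ} (hx : 0 ≤ x) : Real.arctan x ≤ x := by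
  simpa only [Real.tan_arctan] using
    Real.le_tan (Real.arctan_nonneg.mpr hx) (Real.arctan_lt_pi_div_two x)

theorem pi_div_two_sub_inv_le_arctan {x : ℝ} (hx : 0 < x) :
    Real.pi / 2 - x⁻¹ ≤ Real.arctan x := by
  have hinv := arctan_le_self_of_nonneg (inv_nonneg.mpr hx.le)
  rw [Real.arctan_inv_of_pos hx] at hinv
  linarith

theorem arctan_sub_arctan_le {x y : ℝ} (h : -1 < x * y) (hxy : x ≤ y) :
    Real.arctan y - Real.arctan x ≤ (y - x) / (1 + x * y) := by
  have hsub : Real.arctan y - Real.arctan x = Real.arctan ((y - x) / (1 + x * y)) := by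
    rw [sub_eq_add_neg, ← Real.arctan_neg, Real.arctan_add (by linarith)]
    congr 2
    ring
  rw [hsub]
  exact arctan_le_self_of_nonneg (div_nonneg (by linarith) (by linarith))

theorem arctan_div_sub_arctan_div_le {s t u : ℝ} (hs : 0 < s) (ht : 0 < t) (htu : t ≤ u) :
    Real.arctan (u / s) - Real.arctan (t / s) ≤
      s / 2 * ((u ^ 2 - t ^ 2) / (t * (s ^ 2 + t ^ 2))) := by
  have hu : 0 < u := ht.trans_le htu
  calc Real.arctan (u / s) - Real.arctan (t / s)
      ≤ (u / s - t / s) / (1 + t / s * (u / s)) :=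
        arctan_sub_arctan_le (neg_one_lt_zero.trans (by positivity)) (by gcongr)
    _ = s * (u - t) / (s ^ 2 + t * u) := by field_simp
    _ ≤ s * (u - t) / (s ^ 2 + t * t) := by
        have : 0 ≤ u - t := sub_nonneg.mpr htu
        gcongr
    _ = s / 2 * ((u - t) * (2 * t) / (t * (s ^ 2 + t ^ 2))) := by field_simp
    _ ≤ s / 2 * ((u ^ 2 - t ^ 2) / (t * (s ^ 2 + t ^ 2))) := by
        gcongr
        nlinarith [sq_nonneg (u - t)]

/-- The sum is a lower Riemann sum for the integral of `1 / (√x (s² + x))`, an antiderivative of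
which is `2 arctan (√x / s) / s`. -/
theorem sum_inv_sqrt_mul_sq_add_ge {s : ℝ} (hs : 0 < s) (K : ℕ) :
    (Real.pi - 2 * s / √(K + 1) - 2 / s) / s ≤
      ∑ b ∈ Finset.range K, 1 / (√(b + 1) * (s ^ 2 + (b + 1))) := by
  have hterm (b : ℕ) : Real.arctan (√((b + 1 : ℕ) + 1) / s) - Real.arctan (√(b + 1) / s) ≤
      s / 2 * (1 / (√(b + 1) * (s ^ 2 + (b + 1)))) := by
    have h := arctan_div_sub_arctan_div_le hs (Real.sqrt_pos.mpr (by positivity : (0 : ℝ) < b + 1))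
      (Real.sqrt_le_sqrt (by push_cast; linarith : (b : ℝ) + 1 ≤ (b + 1 : ℕ) + 1))
    rw [Real.sq_sqrt (by positivity), Real.sq_sqrt (by positivity)] at h
    push_cast at h ⊢
    rwa [add_sub_cancel_left] at h
  have htelescope : Real.arctan (√(K + 1) / s) - Real.arctan (1 / s) ≤
      s / 2 * ∑ b ∈ Finset.range K, 1 / (√(b + 1) * (s ^ 2 + (b + 1))) := by
    rw [Finset.mul_sum]
    refine le_trans (le_of_eq ?_) (Finset.sum_le_sum fun b _ => hterm b)
    rw [Finset.sum_range_sub fun b : ℕ => Real.arctan (√(b + 1) / s)]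
    simp
  have htop : Real.pi / 2 - s / √(K + 1) ≤ Real.arctan (√(K + 1) / s) := by
    simpa only [inv_div] using
      pi_div_two_sub_inv_le_arctan (x := √((K : ℝ) + 1) / s) (by positivity)
  have hbottom : Real.arctan (1 / s) ≤ 1 / s := arctan_le_self_of_nonneg (by positivity)
  rw [div_le_iff₀ hs]
  linarith [mul_div_assoc 2 s (√((K : ℝ) + 1)), mul_one_div 2 s]

end Arctan

section Hilbert

/-- The weights `1 / √(a + 1)`, on which the Hilbert matrix almost attains its norm `π`. -/
def hilbertWeight (a : ℕ) : ℝ :=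
  1 / √(a + 1)

theorem hilbertWeight_pos (a : ℕ) : 0 < hilbertWeight a := by
  unfold hilbertWeight
  positivity

theorem hilbertWeight_sq (a : ℕ) : hilbertWeight a ^ 2 = 1 / ((a : ℝ) + 1) := by
  rw [hilbertWeight, div_pow, Real.sq_sqrt (by positivity), one_pow]

theorem sum_hilbertWeight_le (K : ℕ) : ∑ a ∈ Finset.range K, hilbertWeight a ≤ 2 * √K := by
  have hterm (a : ℕ) : hilbertWeight a ≤ 2 * √(a + 1 : ℕ) - 2 * √a := by
    have hs : √(a : ℝ) ^ 2 = a := Real.sq_sqrt (by positivity)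
    have ht : √((a : ℝ) + 1) ^ 2 = a + 1 := Real.sq_sqrt (by positivity)
    rw [hilbertWeight, div_le_iff₀ (by positivity)]
    push_cast
    nlinarith [sq_nonneg (√((a : ℝ) + 1) - √a)]
  calc ∑ a ∈ Finset.range K, hilbertWeight a
      ≤ ∑ a ∈ Finset.range K, (2 * √(a + 1 : ℕ) - 2 * √a) := Finset.sum_le_sum fun a _ => hterm a
    _ = 2 * √K := by
        rw [Finset.sum_range_sub fun a : ℕ => 2 * √(a : ℝ)]
        simp

theorem hilbertWeight_succ_cube_le (a : ℕ) :
    hilbertWeight (a + 1) ^ 3 ≤ 2 * hilbertWeight a - 2 * hilbertWeight (a + 1) := by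
  have hv : 0 < hilbertWeight (a + 1) := hilbertWeight_pos _
  have hvu : hilbertWeight (a + 1) ≤ hilbertWeight a := by
    unfold hilbertWeight
    gcongr
    linarith
  have hsub : hilbertWeight a ^ 2 - hilbertWeight (a + 1) ^ 2 =
      hilbertWeight a ^ 2 * hilbertWeight (a + 1) ^ 2 := by
    rw [hilbertWeight_sq, hilbertWeight_sq]
    push_cast
    field_simp
    ring
  have hmul : hilbertWeight a * (hilbertWeight (a + 1) ^ 2 * hilbertWeight a) ≤
      hilbertWeight a * (2 * hilbertWeight a - 2 * hilbertWeight (a + 1)) := by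
    nlinarith [sq_nonneg (hilbertWeight a - hilbertWeight (a + 1))]
  calc hilbertWeight (a + 1) ^ 3 = hilbertWeight (a + 1) ^ 2 * hilbertWeight (a + 1) := pow_succ _ 2
    _ ≤ hilbertWeight (a + 1) ^ 2 * hilbertWeight a := by gcongr
    _ ≤ 2 * hilbertWeight a - 2 * hilbertWeight (a + 1) :=
        le_of_mul_le_mul_left hmul (hilbertWeight_pos a)

theorem sum_hilbertWeight_cube_le (K : ℕ) : ∑ a ∈ Finset.range K, hilbertWeight a ^ 3 ≤ 3 := by
  cases K with
  | zero => simp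
  | succ K =>
    have hzero : hilbertWeight 0 = 1 := by simp [hilbertWeight]
    calc ∑ a ∈ Finset.range (K + 1), hilbertWeight a ^ 3
        = ∑ a ∈ Finset.range K, hilbertWeight (a + 1) ^ 3 + 1 := by
          rw [Finset.sum_range_succ', hzero, one_pow]
      _ ≤ ∑ a ∈ Finset.range K, (2 * hilbertWeight a - 2 * hilbertWeight (a + 1)) + 1 := by
          gcongr
          exact hilbertWeight_succ_cube_le _
      _ = 2 - 2 * hilbertWeight K + 1 := by
          rw [Finset.sum_range_sub' fun a => 2 * hilbertWeight a, hzero, mul_one]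
      _ ≤ 3 := by linarith [hilbertWeight_pos K]

theorem sum_hilbertWeight_mul_div_ge (K a : ℕ) :
    Real.pi * hilbertWeight a ^ 2 - 2 * hilbertWeight K * hilbertWeight a
        - 2 * hilbertWeight a ^ 3 ≤
      ∑ b ∈ Finset.range K, hilbertWeight a * hilbertWeight b / (a + b + 1) := by
  have hs : 0 < √((a : ℝ) + 1) := by positivity
  have hrow := sum_inv_sqrt_mul_sq_add_ge hs K
  rw [Real.sq_sqrt (by positivity)] at hrow
  calc Real.pi * hilbertWeight a ^ 2 - 2 * hilbertWeight K * hilbertWeight a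
        - 2 * hilbertWeight a ^ 3
      = hilbertWeight a * ((Real.pi - 2 * √(a + 1) / √(K + 1) - 2 / √(a + 1)) / √(a + 1)) := by
        unfold hilbertWeight
        field_simp
    _ ≤ hilbertWeight a * ∑ b ∈ Finset.range K, 1 / (√(b + 1) * (a + 1 + (b + 1))) := by
        have := (hilbertWeight_pos a).le
        gcongr
    _ ≤ ∑ b ∈ Finset.range K, hilbertWeight a * hilbertWeight b / (a + b + 1) := by
        rw [Finset.mul_sum]
        refine Finset.sum_le_sum fun b _ => ?_
        have := (hilbertWeight_pos a).le
        have hb : hilbertWeight b = 1 / √((b : ℝ) + 1) := rfl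
        rw [mul_div_assoc, hb, div_div]
        gcongr _ * (_ / (_ * ?_))
        linarith

theorem hilbert_double_sum_ge (K : ℕ) :
    Real.pi * ∑ a ∈ Finset.range K, hilbertWeight a ^ 2 - 10 ≤
      ∑ a ∈ Finset.range K, ∑ b ∈ Finset.range K,
        hilbertWeight a * hilbertWeight b / (a + b + 1) := by
  have hcross : hilbertWeight K * ∑ a ∈ Finset.range K, hilbertWeight a ≤ 2 := by
    calc hilbertWeight K * ∑ a ∈ Finset.range K, hilbertWeight a
        ≤ hilbertWeight K * (2 * √(K + 1)) := by
          have := (hilbertWeight_pos K).le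
          gcongr
          exact (sum_hilbertWeight_le K).trans (by gcongr; linarith)
      _ = 2 := by
          unfold hilbertWeight
          field_simp
  refine le_trans ?_ (Finset.sum_le_sum fun a _ => sum_hilbertWeight_mul_div_ge K a)
  simp only [Finset.sum_sub_distrib, ← Finset.mul_sum]
  linarith [sum_hilbertWeight_cube_le K]

end Hilbert

section SecKernel

variable {d : ℕ}

theorem cos_fourierAngle_pos (i j : Fin d) : 0 < Real.cos (fourierAngle i j) := by
  have hd : (0 : ℝ) < d := by exact_mod_cast i.pos
  have hi : ((i : ℕ) : ℝ) < d := by exact_mod_cast i.isLt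
  have hj : ((j : ℕ) : ℝ) < d := by exact_mod_cast j.isLt
  have hangle : fourierAngle i j = Real.pi / 2 * (((i : ℕ) - (j : ℕ)) / d) := by
    unfold fourierAngle
    field_simp
  have hquot : |(((i : ℕ) : ℝ) - (j : ℕ)) / d| < 1 := by
    rw [abs_div, abs_of_pos hd, div_lt_one hd, abs_lt]
    constructor <;> linarith [(Nat.cast_nonneg i : (0 : ℝ) ≤ _), (Nat.cast_nonneg j : (0 : ℝ) ≤ _)]
  refine Real.cos_pos_of_mem_Ioo (abs_lt.mp ?_)
  rw [hangle, abs_mul, abs_of_pos Real.pi_div_two_pos]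
  exact mul_lt_of_lt_one_right Real.pi_div_two_pos hquot

theorem secKernel_nonneg (i j : Fin d) : 0 ≤ secKernel i j :=
  one_div_nonneg.mpr (mul_nonneg d.cast_nonneg (cos_fourierAngle_pos i j).le)

theorem secKernel_comm (i j : Fin d) : secKernel i j = secKernel j i := by
  rw [secKernel, secKernel, fourierAngle_swap i j, Real.cos_neg]

theorem le_secKernel_rev (i j : Fin d) :
    2 / (Real.pi * ((i : ℕ) + (j : ℕ) + 1)) ≤ secKernel i j.rev := by
  have hd : (0 : ℝ) < d := by exact_mod_cast i.pos
  have hrev : ((j.rev : ℕ) : ℝ) = d - ((j : ℕ) + 1) := by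
    rw [Fin.val_rev, Nat.cast_sub j.isLt, Nat.cast_succ]
  have hangle : fourierAngle i j.rev =
      Real.pi * ((i : ℕ) + (j : ℕ) + 1) / (2 * d) - Real.pi / 2 := by
    rw [fourierAngle, hrev]
    field_simp
    ring
  have hcos : d * Real.cos (fourierAngle i j.rev) ≤ Real.pi * ((i : ℕ) + (j : ℕ) + 1) / 2 := by
    calc d * Real.cos (fourierAngle i j.rev)
        = d * Real.sin (Real.pi * ((i : ℕ) + (j : ℕ) + 1) / (2 * d)) := by
          rw [hangle, Real.cos_sub_pi_div_two]
      _ ≤ d * (Real.pi * ((i : ℕ) + (j : ℕ) + 1) / (2 * d)) := by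
          gcongr
          exact Real.sin_le (by positivity)
      _ = Real.pi * ((i : ℕ) + (j : ℕ) + 1) / 2 := by field_simp
  rw [secKernel, ← one_div_div]
  exact one_div_le_one_div_of_le (mul_pos hd (cos_fourierAngle_pos i j.rev)) hcos

end SecKernel

section EndWeight

theorem two_mul_sum_castAdd_natAdd_le {K : ℕ} {F : Fin (K + K) → Fin (K + K) → ℝ}
    (hF : ∀ i j, 0 ≤ F i j) (hsymm : ∀ i j, F i j = F j i) :
    2 * ∑ a, ∑ b, F (Fin.castAdd K a) (Fin.natAdd K b) ≤ ∑ i, ∑ j, F i j := by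
  have hswap : ∑ a, ∑ b, F (Fin.natAdd K a) (Fin.castAdd K b) =
      ∑ a, ∑ b, F (Fin.castAdd K a) (Fin.natAdd K b) := by
    rw [Finset.sum_comm]
    simp only [hsymm (Fin.natAdd K _)]
  have hnonneg (f g : Fin K → Fin (K + K)) : 0 ≤ ∑ a, ∑ b, F (f a) (g b) :=
    Finset.sum_nonneg fun _ _ => Finset.sum_nonneg fun _ _ => hF _ _
  simp only [Fin.sum_univ_add, Finset.sum_add_distrib, hswap]
  linarith [hnonneg (Fin.castAdd K) (Fin.castAdd K), hnonneg (Fin.natAdd K) (Fin.natAdd K)]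

/-- The weights `hilbertWeight`, placed at both ends of `{0, …, 2 K - 1}` and read inwards. -/
def endWeight (K : ℕ) : Fin (K + K) → ℝ :=
  Fin.append (fun a => hilbertWeight a) fun a => hilbertWeight a.rev

theorem endWeight_nonneg (K : ℕ) (i : Fin (K + K)) : 0 ≤ endWeight K i := by
  refine Fin.addCases (fun a => ?_) (fun a => ?_) i
  · simpa only [endWeight, Fin.append_left] using (hilbertWeight_pos _).le
  · simpa only [endWeight, Fin.append_right] using (hilbertWeight_pos _).le

theorem sum_endWeight_sq (K : ℕ) :
    ∑ i, endWeight K i ^ 2 = 2 * ∑ a ∈ Finset.range K, hilbertWeight a ^ 2 := by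
  have hrev : ∑ a : Fin K, hilbertWeight a.rev ^ 2 = ∑ a : Fin K, hilbertWeight a ^ 2 :=
    Equiv.sum_comp Fin.revPerm fun a : Fin K => hilbertWeight a ^ 2
  simp only [endWeight, Fin.sum_univ_add, Fin.append_left, Fin.append_right, hrev]
  rw [Fin.sum_univ_eq_sum_range fun a => hilbertWeight a ^ 2, two_mul]

theorem endWeight_mul_secKernel_ge {K : ℕ} (a b : Fin K) :
    2 / Real.pi * (hilbertWeight a * hilbertWeight b / ((a : ℕ) + (b : ℕ) + 1)) ≤
      endWeight K (Fin.castAdd K a) * endWeight K (Fin.natAdd K b.rev) *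
        secKernel (Fin.castAdd K a) (Fin.natAdd K b.rev) := by
  have hrev : Fin.natAdd K b.rev = (Fin.castAdd K b).rev := by
    ext
    simp only [Fin.val_natAdd, Fin.val_rev, Fin.val_castAdd]
    omega
  have hsec := le_secKernel_rev (Fin.castAdd K a) (Fin.castAdd K b)
  rw [← hrev, Fin.val_castAdd, Fin.val_castAdd] at hsec
  simp only [endWeight, Fin.append_left, Fin.append_right, Fin.rev_rev]
  calc 2 / Real.pi * (hilbertWeight a * hilbertWeight b / ((a : ℕ) + (b : ℕ) + 1))
      = hilbertWeight a * hilbertWeight b * (2 / (Real.pi * ((a : ℕ) + (b : ℕ) + 1))) := by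
        field_simp
    _ ≤ _ := mul_le_mul_of_nonneg_left hsec
        (mul_pos (hilbertWeight_pos _) (hilbertWeight_pos _)).le

theorem sum_endWeight_mul_secKernel_ge (K : ℕ) :
    2 * ∑ i, endWeight K i ^ 2 - 40 / Real.pi ≤
      ∑ i, ∑ j, endWeight K i * endWeight K j * secKernel i j := by
  set F : Fin (K + K) → Fin (K + K) → ℝ :=
    fun i j => endWeight K i * endWeight K j * secKernel i j
  have hF (i j) : 0 ≤ F i j :=
    mul_nonneg (mul_nonneg (endWeight_nonneg K i) (endWeight_nonneg K j)) (secKernel_nonneg i j)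
  have hsymm (i j) : F i j = F j i := by
    simp only [F, secKernel_comm i j, mul_comm (endWeight K i)]
  calc 2 * ∑ i, endWeight K i ^ 2 - 40 / Real.pi
      = 2 * (2 / Real.pi * (Real.pi * ∑ a ∈ Finset.range K, hilbertWeight a ^ 2 - 10)) := by
        rw [sum_endWeight_sq]
        field_simp
        ring
    _ ≤ 2 * (2 / Real.pi * ∑ a ∈ Finset.range K, ∑ b ∈ Finset.range K,
          hilbertWeight a * hilbertWeight b / (a + b + 1)) := by
        gcongr
        exact hilbert_double_sum_ge K
    _ = 2 * ∑ a : Fin K, ∑ b : Fin K,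
          2 / Real.pi * (hilbertWeight a * hilbertWeight b / ((a : ℕ) + (b : ℕ) + 1)) := by
        simp only [Finset.mul_sum, Finset.sum_range]
    _ ≤ 2 * ∑ a : Fin K, ∑ b : Fin K, F (Fin.castAdd K a) (Fin.natAdd K b.rev) := by
        gcongr with a _ b _
        exact endWeight_mul_secKernel_ge a b
    _ = 2 * ∑ a : Fin K, ∑ b : Fin K, F (Fin.castAdd K a) (Fin.natAdd K b) := by
        congr 1
        exact Finset.sum_congr rfl fun a _ =>
          Equiv.sum_comp Fin.revPerm fun b => F (Fin.castAdd K a) (Fin.natAdd K b)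
    _ ≤ ∑ i, ∑ j, F i j := two_mul_sum_castAdd_natAdd_le hF hsymm

theorem tendsto_sum_endWeight_sq :
    Filter.Tendsto (fun K => ∑ i, endWeight K i ^ 2) Filter.atTop Filter.atTop := by
  simp only [sum_endWeight_sq, hilbertWeight_sq]
  exact Real.tendsto_sum_range_one_div_nat_succ_atTop.const_mul_atTop two_pos

end EndWeight

theorem exists_isNChotomicQC_ZG_lt {ε : ℝ} (hε : 0 < ε) :
    ∃ d, 1 ≤ d ∧ ∃ P, IsNChotomicQC d d P ∧ ZG P < ε := by
  obtain ⟨K, hK⟩ :=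
    (tendsto_sum_endWeight_sq.eventually_gt_atTop (40 / Real.pi / ε)).exists
  have hpos : 0 < ∑ i, endWeight K i ^ 2 := lt_trans (by positivity) hK
  have hK1 : 1 ≤ K := by
    by_contra! h
    obtain rfl : K = 0 := by omega
    simp at hpos
  obtain ⟨P, hP, hZG⟩ := exists_isNChotomicQC_ZG_eq (endWeight K) hpos
  refine ⟨K + K, by omega, P, hP, ?_⟩
  have hform := sum_endWeight_mul_secKernel_ge K
  rw [div_lt_comm₀ hε hpos] at hK
  calc ZG P = 2 - (∑ i, ∑ j, endWeight K i * endWeight K j * secKernel i j) /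
        ∑ i, endWeight K i ^ 2 := hZG
    _ ≤ 2 - (2 * ∑ i, endWeight K i ^ 2 - 40 / Real.pi) / ∑ i, endWeight K i ^ 2 := by gcongr
    _ = 40 / Real.pi / ∑ i, endWeight K i ^ 2 := by
        field_simp
        ring
    _ < ε := hK

/-- For every `n ≥ 1`, quantum correlations are not `n`-chotomic:
there are `m, r ≥ 1` and an `m`-chotomic quantum correlation `Q ∈ 𝒫₂[m,r]` whose
value of `I'` lies strictly below the infimum of `I'` over all `n`-chotomic quantum
correlations with any number `r' ≥ 1` of outcomes. -/
theorem quantum_correlations_not_nchotomic (n : ℕ) (hn : 1 ≤ n) :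
    ∃ (m r : ℕ), 1 ≤ m ∧ 1 ≤ r ∧
      ∃ Q : Fin 2 → Fin 2 → Fin r → Fin r → ℝ, IsNChotomicQC m r Q ∧
        ZG Q < sInf {x | ∃ (r' : ℕ) (P : Fin 2 → Fin 2 → Fin r' → Fin r' → ℝ),
          1 ≤ r' ∧ IsNChotomicQC n r' P ∧ ZG P = x} := by
  have hn' : (0 : ℝ) < n := by exact_mod_cast hn
  obtain ⟨d, hd, Q, hQ, hlt⟩ := exists_isNChotomicQC_ZG_lt (one_div_pos.mpr hn')
  refine ⟨d, d, hd, hd, Q, hQ, hlt.trans_le (le_csInf ?nonempty ?lower_bound)⟩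
  case nonempty =>
    have hP : IsNChotomicQC n 1 (fourierCorrelation fun _ => 1) :=
      isNChotomicQC_fourierCorrelation le_rfl hn (by simp)
    exact ⟨_, 1, _, le_rfl, hP, rfl⟩
  case lower_bound =>
    rintro _ ⟨r, P, -, hP, rfl⟩
    rw [div_le_iff₀' hn']
    exact hP.one_le_mul_ZG
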